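/- arXiv:math/9912137 — 9 statements merged into one kernel-verified Lean document; each statement's English description precedes it below -/
import Mathlib

section
/- Let A be a commutative ring, let F ∈ A[x] be monic of degree n ≥ 1, let G ∈ A[x], and let φ : A → K be a ring homomorphism into a field K. Write F^φ, G^φ ∈ K[x] for the polynomials obtained by applying φ to the coefficients, and let α_1, …, α_n be the roots of F^φ (with multiplicity) in an algebraic closure of K. Then φ(s_{F,n}(G)) = G^φ(α_1) ⋯ G^φ(α_n) in the algebraic closure of K. -/
/-!
Multiplication by `x` on `A[x]/(F)` has, in the basis `1, x, …, x^(n-1)`, a matrix `M` (the companion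
matrix) whose characteristic polynomial is `F`: Cayley-Hamilton makes the characteristic polynomial
a multiple of `F`, and both are monic of degree `n`. Multiplication by the class of `G` has matrix
`G(M)`, so applying `φ` entrywise turns its determinant into `det G^φ(N)`, where `N` is the image of
`M` over the algebraic closure and has characteristic polynomial `F^φ`.

Over an algebraically closed field, `det p(N)` is the product of the values of `p` at the roots of
the characteristic polynomial of `N` (`det_aeval_eq_prod_roots_charpoly`). Both sides are
multiplicative in `p`, which leaves constants and linear factors `X - a`; for the latter,
`det (N - a)` is, up to sign, the characteristic polynomial evaluated at `a`.
-/

open Polynomial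

lemma det_aeval_X_sub_C {L : Type*} [Field L] [IsAlgClosed L] {m : ℕ}
    (N : Matrix (Fin m) (Fin m) L) (a : L) :
    (aeval N (X - C a)).det = (N.charpoly.roots.map (fun α => (X - C a).eval α)).prod := by
  have hs : N.charpoly.Splits := IsAlgClosed.splits _
  have h1 : aeval N (X - C a) = -(Matrix.scalar (Fin m) a - N) := by
    simp [Matrix.algebraMap_eq_diagonal, Matrix.scalar_apply, Pi.algebraMap_def]
  have hcard : N.charpoly.roots.card = m := by
    rw [← hs.natDegree_eq_card_roots, Matrix.charpoly_natDegree_eq_dim, Fintype.card_fin]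
  have h2 : (N.charpoly.roots.map (fun α => (X - C a).eval α))
      = (N.charpoly.roots.map (a - ·)).map Neg.neg := by
    simp [Multiset.map_map]
  rw [h1, Matrix.det_neg, ← Matrix.eval_charpoly,
    hs.eval_eq_prod_roots_of_monic N.charpoly_monic, h2, Multiset.prod_map_neg]
  simp [hcard]

/-- The determinant counterpart of the spectral mapping theorem: a product over the eigenvalues of
`N` with their algebraic multiplicities. -/
lemma det_aeval_eq_prod_roots_charpoly {L : Type*} [Field L] [IsAlgClosed L] {m : ℕ}
    (N : Matrix (Fin m) (Fin m) L) (p : L[X]) :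
    (aeval N p).det = (N.charpoly.roots.map (fun α => p.eval α)).prod := by
  have hcard : N.charpoly.roots.card = m := by
    rw [← (IsAlgClosed.splits N.charpoly).natDegree_eq_card_roots,
      Matrix.charpoly_natDegree_eq_dim, Fintype.card_fin]
  have key : ∀ s : Multiset L, (aeval N (s.map (fun a => X - C a)).prod).det
      = (N.charpoly.roots.map (fun α => (s.map (fun a => X - C a)).prod.eval α)).prod := by
    intro s
    induction s using Multiset.induction_on with
    | empty => simp
    | cons a s ih =>
      simp only [Multiset.map_cons, Multiset.prod_cons, map_mul, Matrix.det_mul, eval_mul,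
        Multiset.prod_map_mul, ih, det_aeval_X_sub_C]
  rw [(IsAlgClosed.splits p).eq_prod_roots]
  simp only [map_mul, Matrix.det_mul, eval_mul, Multiset.prod_map_mul, key]
  simp [hcard, Matrix.algebraMap_eq_diagonal, Matrix.det_diagonal]

/-- The characteristic polynomial of the companion matrix of a monic polynomial `F` is `F`. -/
lemma charpoly_leftMulMatrix_root {A : Type*} [CommRing A] [Nontrivial A] {F : A[X]}
    (hF : F.Monic) :
    (Algebra.leftMulMatrix (AdjoinRoot.powerBasis' hF).basis (AdjoinRoot.root F)).charpoly = F := by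
  set M := Algebra.leftMulMatrix (AdjoinRoot.powerBasis' hF).basis (AdjoinRoot.root F) with hM
  have hroot : aeval (AdjoinRoot.root F) M.charpoly = 0 := by
    apply Algebra.leftMulMatrix_injective (AdjoinRoot.powerBasis' hF).basis
    rw [← Polynomial.aeval_algHom_apply, map_zero]
    exact Matrix.aeval_self_charpoly M
  rw [AdjoinRoot.aeval_eq, AdjoinRoot.mk_eq_zero] at hroot
  refine (eq_of_monic_of_dvd_of_natDegree_le hF M.charpoly_monic hroot ?_)
  rw [Matrix.charpoly_natDegree_eq_dim, Fintype.card_fin, AdjoinRoot.powerBasis'_dim]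

/-- Let `A` be a commutative ring, `F ∈ A[x]` monic of degree `n ≥ 1`,
`G ∈ A[x]`, and `φ : A → K` a ring homomorphism into a field `K`.  Let `α_1, …, α_n` be the
roots of `F^φ` (with multiplicity) in an algebraic closure of `K`.  Then
`φ(s_{F,n}(G)) = G^φ(α_1) ⋯ G^φ(α_n)` in the algebraic closure of `K`, where `s_{F,n}(G)`
is the determinant of the multiplication-by-`G` endomorphism of the free `A`-module
`A[x]/(F)`. -/
theorem statement2 {A K : Type*} [CommRing A] [Field K] (φ : A →+* K) (n : ℕ) (hn : 1 ≤ n)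
    (F : Polynomial A) (hF : F.Monic) (hdeg : F.natDegree = n) (G : Polynomial A) :
    algebraMap K (AlgebraicClosure K)
        (φ (LinearMap.det (LinearMap.mulLeft A (AdjoinRoot.mk F G))))
      = (((F.map φ).aroots (AlgebraicClosure K)).map
          (fun α => Polynomial.aeval α (G.map φ))).prod := by
  have : Nontrivial A := φ.domain_nontrivial
  set L := AlgebraicClosure K
  let ψ : A →+* L := (algebraMap K L).comp φ
  let b := (AdjoinRoot.powerBasis' hF).basis
  let M := Algebra.leftMulMatrix b (AdjoinRoot.root F)
  have hdet : LinearMap.det (LinearMap.mulLeft A (AdjoinRoot.mk F G)) = (aeval M G).det := by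
    rw [← LinearMap.det_toMatrix b, Polynomial.aeval_algHom_apply, AdjoinRoot.aeval_eq]
    rfl
  have hmap : ψ.mapMatrix (aeval M G) = aeval (ψ.mapMatrix M) (G.map ψ) := by
    rw [aeval_eq_sum_range' (lt_add_one G.natDegree),
      aeval_eq_sum_range' (Nat.lt_succ_of_le (natDegree_map_le (f := ψ) (p := G))), map_sum]
    refine Finset.sum_congr rfl fun i _ => ?_
    rw [coeff_map, ← map_pow ψ.mapMatrix]
    ext j k
    simp only [RingHom.mapMatrix_apply, Matrix.map_apply, Matrix.smul_apply, smul_eq_mul, map_mul]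
  have hchar : (ψ.mapMatrix M).charpoly = F.map ψ := by
    rw [RingHom.mapMatrix_apply, Matrix.charpoly_map, charpoly_leftMulMatrix_root hF]
  change ψ _ = _
  rw [hdet, RingHom.map_det, hmap, det_aeval_eq_prod_roots_charpoly, hchar, aroots_def,
    Polynomial.map_map]
  simp only [← eval_map_algebraMap, Polynomial.map_map]
  rfl
end

section
/- Let k be a field, A a commutative k-algebra, and F = x^n − u_1x^{n−1} + ⋯ + (−1)^n u_n ∈ A[x] a monic polynomial of degree n ≥ 1. The following six assertions are equivalent: (1) for every maximal ideal P of A with residue map φ : A → κ(P) = A/P, every root of F^φ = x^n − φ(u_1)x^{n−1} + ⋯ + (−1)^n φ(u_n) in an algebraic closure of κ(P) is either zero or transcendental over k; (2) for every g ∈ k[x] with g(0) ≠ 0, the element s_{F,n}(g) is a unit of A; (3) for every g ∈ k[x] with g(0) ≠ 0, the class of g in A[x]/(F) is a unit; (4) the canonical localization map A[x]/(F) → (A ⊗_k k[x]_(x))/(F) is a ring isomorphism; (5) the A-module (A ⊗_k k[x]_(x))/(F) is free of rank n with basis the classes of 1, x, …, x^{n−1}; (6) for every maximal ideal P of A with residue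 map φ, the κ(P)-vector space (κ(P) ⊗_k k[x]_(x))/(F^φ) is n-dimensional with basis the classes of 1, x, …, x^{n−1}. -/
/-!
Everything is compared with the unit condition (3): each `g ∈ k[x]` with `g(0) ≠ 0` is invertible
modulo `F`.

* (2) ⟺ (3): `A[x]/(F)` is finite free over `A`, so multiplication by an element is bijective iff
  its determinant is a unit.
* (3) ⟺ (4): the target of the canonical map is the localization of `A[x]/(F)` at the classes of
  such `g`, and localizing at a set `S` changes nothing iff `S` already consists of units.
* (4) ⟺ (5): the classes of `1, x, …, x^{n-1}` form an `A`-basis of `A[x]/(F)`, and the `A`-linear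
  canonical map is bijective iff it sends this basis to a basis.
* (3) ⟹ (1): a nonzero root that is algebraic over `k` is killed by its minimal polynomial `g` over
  `k`, and `g(0) ≠ 0`; evaluation at the root would send the unit `g` to `0`.
* (1) ⟹ (3): if `g` is not a unit modulo `F`, it lies in a maximal ideal `Q` of `A[x]/(F)`. By
  integrality `Q` lies over a maximal ideal `P` of `A`, and the residue field of `Q` embeds over
  `A/P` into the algebraic closure of `A/P`. The image of `x` is then a root of both `F^φ` and `g`,
  hence nonzero and algebraic over `k`.
* (3) ⟹ (6) ⟹ (1): units map to units under `A[x]/(F) → (A/P)[x]/(F^φ)`, and the equivalence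
  (3) ⟺ (5) as well as the argument for (3) ⟹ (1) apply to `F^φ` over `A/P`.
-/

open Polynomial

/-- The multiplicative set of polynomials over `k` with nonzero constant term,
i.e. the complement of the prime ideal `(x)` in `k[x]`. -/
def nzConst (k : Type*) [Field k] : Submonoid (Polynomial k) where
  carrier := {g | g.eval 0 ≠ 0}
  mul_mem' := fun {a b} ha hb => by
    simp only [Set.mem_setOf_eq, eval_mul] at *
    exact mul_ne_zero ha hb
  one_mem' := by simp

/-- The image in `A[x]` of the multiplicative set of polynomials over `k`
with nonzero constant term. -/
noncomputable def nzConstMap (k A : Type*) [Field k] [CommRing A] [Algebra k A] :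
    Submonoid (Polynomial A) :=
  (nzConst k).map (mapRingHom (algebraMap k A)).toMonoidHom

/-- `A ⊗_k k[x]_(x)`, realized as the localization of `A[x]` at the image of the
multiplicative set of polynomials over `k` with nonzero constant term. -/
noncomputable abbrev LocX (k A : Type*) [Field k] [CommRing A] [Algebra k A] :=
  Localization (nzConstMap k A)

section helpers

variable {k A : Type*} [Field k] [CommRing A] [Algebra k A]

lemma span_le_comap_loc (F : Polynomial A) :
    Ideal.span {F} ≤ (Ideal.span {algebraMap (Polynomial A) (LocX k A) F}).comap
      (algebraMap (Polynomial A) (LocX k A)) := by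
  rw [Ideal.span_le]
  exact Set.singleton_subset_iff.mpr
    (Ideal.mem_comap.mpr (Ideal.subset_span (Set.mem_singleton _)))

/-- The canonical map `A[x]/(F) → (A ⊗_k k[x]_(x))/(F)`. -/
noncomputable def canonMap (k : Type*) {A : Type*} [Field k] [CommRing A] [Algebra k A]
    (F : Polynomial A) :
    (Polynomial A ⧸ Ideal.span {F}) →+*
      (LocX k A ⧸ Ideal.span {algebraMap (Polynomial A) (LocX k A) F}) :=
  Ideal.quotientMap _ (algebraMap (Polynomial A) (LocX k A)) (span_le_comap_loc F)

lemma canonMap_mk (F p : Polynomial A) :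
    canonMap k F (Ideal.Quotient.mk _ p) =
      Ideal.Quotient.mk _ (algebraMap (Polynomial A) (LocX k A) p) :=
  Ideal.quotientMap_mk

/-- An element of `A[x]/(F)` is a unit iff its norm over `A` is, as `A[x]/(F)` is finite free. -/
lemma isUnit_norm_iff {F : Polynomial A} (hF : F.Monic) (z : AdjoinRoot F) :
    IsUnit (LinearMap.det (LinearMap.mulLeft A z)) ↔ IsUnit z := by
  have := hF.free_adjoinRoot
  have := hF.finite_adjoinRoot
  rw [← LinearMap.isUnit_iff_isUnit_det]
  exact Algebra.lmul_isUnit_iff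

lemma isUnit_mk_of_bijective (F : Polynomial A) (h : Function.Bijective (canonMap k F))
    (g : Polynomial k) (hg : g.eval 0 ≠ 0) :
    IsUnit (AdjoinRoot.mk F (g.map (algebraMap k A))) := by
  let e := RingEquiv.ofBijective _ h
  have hu : IsUnit (algebraMap (Polynomial A) (LocX k A) (g.map (algebraMap k A))) :=
    IsLocalization.map_units (M := nzConstMap k A) _ ⟨_, g, hg, rfl⟩
  have h2 : IsUnit (e (Ideal.Quotient.mk (Ideal.span {F}) (g.map (algebraMap k A)))) := by
    change IsUnit (canonMap k F (Ideal.Quotient.mk _ _))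
    rw [canonMap_mk]
    exact hu.map _
  exact (MulEquiv.isUnit_map e).mp h2

/-- Inverses modulo `F`, lifted to `A[x]`, of the denominators occurring in `LocX k A`. -/
lemma exists_inverse {F s : Polynomial A}
    (h : ∀ g : Polynomial k, g.eval 0 ≠ 0 → IsUnit (AdjoinRoot.mk F (g.map (algebraMap k A))))
    (hs : s ∈ nzConstMap k A) : ∃ t, F ∣ s * t - 1 := by
  obtain ⟨g, hg, rfl⟩ := hs
  obtain ⟨b, hb⟩ := (h g hg).exists_right_inv
  obtain ⟨t, rfl⟩ := AdjoinRoot.mk_surjective b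
  refine ⟨t, AdjoinRoot.mk_eq_mk.mp ?_⟩
  rw [map_mul, map_one]
  exact hb

/-- An inverse `t` of a denominator `s` modulo `F` allows `s` to be cancelled modulo `F`, and
`a / s` to be represented by `a * t`. -/
lemma bijective_of_isUnit_mk (F : Polynomial A)
    (h : ∀ g : Polynomial k, g.eval 0 ≠ 0 →
      IsUnit (AdjoinRoot.mk F (g.map (algebraMap k A)))) :
    Function.Bijective (canonMap k F) := by
  constructor
  · rw [injective_iff_map_eq_zero]
    intro z hz
    obtain ⟨a, rfl⟩ := Ideal.Quotient.mk_surjective z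
    rw [canonMap_mk, Ideal.Quotient.eq_zero_iff_mem, Ideal.mem_span_singleton] at hz
    rw [Ideal.Quotient.eq_zero_iff_mem, Ideal.mem_span_singleton]
    obtain ⟨c, hc⟩ := hz
    obtain ⟨⟨b, s⟩, hbs⟩ := IsLocalization.surj (nzConstMap k A) c
    have h1 : algebraMap (Polynomial A) (LocX k A) (s * a) =
        algebraMap (Polynomial A) (LocX k A) (F * b) := by
      rw [map_mul, map_mul, hc, ← hbs]
      ring
    -- `A[x] → LocX k A` need not be injective: equality only holds after multiplying by some `s'`.
    obtain ⟨s', hs'⟩ := (IsLocalization.eq_iff_exists (nzConstMap k A) _).mp h1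
    obtain ⟨t, u, hu⟩ := exists_inverse h (s' * s).2
    refine ⟨s' * b * t - u * a, ?_⟩
    simp only [Submonoid.coe_mul] at hu
    linear_combination (-a) * hu + t * hs'
  · intro z
    obtain ⟨w, rfl⟩ := Ideal.Quotient.mk_surjective z
    obtain ⟨⟨a, s⟩, has⟩ := IsLocalization.surj (nzConstMap k A) w
    obtain ⟨t, u, hu⟩ := exists_inverse h s.2
    refine ⟨Ideal.Quotient.mk _ (a * t), ?_⟩
    rw [canonMap_mk, Ideal.Quotient.eq, Ideal.mem_span_singleton]
    refine ⟨w * algebraMap _ _ u, ?_⟩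
    have hu' := congrArg (algebraMap (Polynomial A) (LocX k A)) hu
    simp only [map_sub, map_mul, map_one] at hu' ⊢
    simp only at has
    linear_combination w * hu' - algebraMap _ (LocX k A) t * has

/-- The canonical map is `A`-linear and sends the power basis of `A[x]/(F)` to the classes of
`1, x, …, x^{n-1}`, so it is bijective iff these classes form a basis. -/
lemma bijective_iff_basis {n : ℕ} {F : Polynomial A} (hF : F.Monic) (hdeg : F.natDegree = n) :
    Function.Bijective (canonMap k F) ↔
      (LinearIndependent A (fun i : Fin n =>
            Ideal.Quotient.mk (Ideal.span {algebraMap (Polynomial A) (LocX k A) F})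
              (algebraMap (Polynomial A) (LocX k A) (X ^ (i : ℕ)))) ∧
          Submodule.span A (Set.range (fun i : Fin n =>
            Ideal.Quotient.mk (Ideal.span {algebraMap (Polynomial A) (LocX k A) F})
              (algebraMap (Polynomial A) (LocX k A) (X ^ (i : ℕ))))) = ⊤) := by
  subst hdeg
  let ψ : AdjoinRoot F →ₗ[A]
      (LocX k A ⧸ Ideal.span {algebraMap (Polynomial A) (LocX k A) F}) :=
    { toFun := canonMap k F
      map_add' := map_add _
      map_smul' := by
        intro c z
        obtain ⟨p, rfl⟩ := AdjoinRoot.mk_surjective z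
        change canonMap k F (Ideal.Quotient.mk _ (c • p)) =
          c • canonMap k F (Ideal.Quotient.mk _ p)
        rw [canonMap_mk, canonMap_mk]
        exact congrArg (Ideal.Quotient.mk _)
          (map_smul (IsScalarTower.toAlgHom A (Polynomial A) (LocX k A)) c p) }
  let b : Module.Basis (Fin F.natDegree) A (AdjoinRoot F) := (AdjoinRoot.powerBasis' hF).basis
  have hb : (fun i : Fin F.natDegree =>
      Ideal.Quotient.mk (Ideal.span {algebraMap (Polynomial A) (LocX k A) F})
        (algebraMap (Polynomial A) (LocX k A) (X ^ (i : ℕ)))) = ψ ∘ b := by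
    funext i
    have : b i = AdjoinRoot.mk F (X ^ (i : ℕ)) := by
      rw [map_pow, AdjoinRoot.mk_X]
      exact (AdjoinRoot.powerBasis' hF).basis_eq_pow i
    rw [Function.comp_apply, this]
    exact (canonMap_mk F _).symm
  rw [hb]
  change Function.Bijective ψ ↔ _
  constructor
  · intro h
    refine ⟨b.linearIndependent.map' ψ (LinearMap.ker_eq_bot.mpr h.1), ?_⟩
    rw [Set.range_comp, Submodule.span_image, b.span_eq, Submodule.map_top]
    exact LinearMap.range_eq_top.mpr h.2
  · rintro ⟨hli, hsp⟩
    constructor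
    · have h0 : Function.Injective (ψ ∘ₗ b.repr.symm.toLinearMap) := by
        have : ψ ∘ₗ b.repr.symm.toLinearMap = Finsupp.linearCombination A (ψ ∘ b) := by
          ext i
          simp
        rw [this]
        exact hli
      intro x y hxy
      apply b.repr.injective
      apply h0
      simpa using hxy
    · rw [← LinearMap.range_eq_top, ← hsp, Set.range_comp, Submodule.span_image, b.span_eq,
        Submodule.map_top]

lemma isUnit_mk_iff_basis {n : ℕ} {F : Polynomial A} (hF : F.Monic) (hdeg : F.natDegree = n) :
    (∀ g : Polynomial k, g.eval 0 ≠ 0 → IsUnit (AdjoinRoot.mk F (g.map (algebraMap k A)))) ↔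
      (LinearIndependent A (fun i : Fin n =>
            Ideal.Quotient.mk (Ideal.span {algebraMap (Polynomial A) (LocX k A) F})
              (algebraMap (Polynomial A) (LocX k A) (X ^ (i : ℕ)))) ∧
          Submodule.span A (Set.range (fun i : Fin n =>
            Ideal.Quotient.mk (Ideal.span {algebraMap (Polynomial A) (LocX k A) F})
              (algebraMap (Polynomial A) (LocX k A) (X ^ (i : ℕ))))) = ⊤) := by
  rw [← bijective_iff_basis hF hdeg]
  exact ⟨bijective_of_isUnit_mk F, isUnit_mk_of_bijective F⟩

/-- Invertibility of `g` modulo `F` is preserved by base change along `φ : A → B`. -/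
lemma isUnit_mk_map {B : Type*} [CommRing B] [Algebra k B] (φ : A →ₐ[k] B) (F : Polynomial A)
    (g : Polynomial k) (h : IsUnit (AdjoinRoot.mk F (g.map (algebraMap k A)))) :
    IsUnit (AdjoinRoot.mk (F.map (φ : A →+* B)) (g.map (algebraMap k B))) := by
  have h1 := h.map (AdjoinRoot.map (φ : A →+* B) F (F.map (φ : A →+* B)) dvd_rfl)
  rw [AdjoinRoot.map, AdjoinRoot.lift_mk, ← eval₂_map, ← AdjoinRoot.algebraMap_eq, ← aeval_def,
    AdjoinRoot.aeval_eq] at h1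
  rwa [Polynomial.map_map, AlgHom.comp_algebraMap] at h1

/-- A nonzero root of `F` algebraic over `k` is killed by its minimal polynomial over `k`, which
has nonzero constant term and therefore would be a unit modulo `F`. -/
lemma root_of_isUnit_mk {K : Type*} [Field K] [Algebra k K] [Algebra A K] [IsScalarTower k A K]
    (F : Polynomial A)
    (h : ∀ g : Polynomial k, g.eval 0 ≠ 0 → IsUnit (AdjoinRoot.mk F (g.map (algebraMap k A))))
    (α : K) (hα : aeval α F = 0) : α = 0 ∨ Transcendental k α := by
  by_contra! hc
  obtain ⟨h0, halg⟩ := hc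
  have hint : IsIntegral k α := (not_not.mp halg : IsAlgebraic k α).isIntegral
  have hg : (minpoly k α).eval 0 ≠ 0 := by
    rw [← coeff_zero_eq_eval_zero]
    exact minpoly.coeff_zero_ne_zero hint h0
  have := (h _ hg).map (AdjoinRoot.lift (algebraMap A K) α hα)
  rw [AdjoinRoot.lift_mk (by exact hα), ← aeval_def, aeval_map_algebraMap, minpoly.aeval] at this
  exact not_isUnit_zero this

/-- A maximal ideal of `A[x]/(F)` containing the class of `g` yields a common root of `g` and
`F^φ` in the algebraic closure of a residue field of `A`. -/
lemma isUnit_mk_of_roots {F : Polynomial A} (hF : F.Monic)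
    (h : ∀ (P : Ideal A) [P.IsMaximal],
          letI := Ideal.Quotient.field P
          ∀ α : AlgebraicClosure (A ⧸ P),
            Polynomial.aeval α (F.map (Ideal.Quotient.mk P)) = 0 →
              α = 0 ∨ Transcendental k α)
    (g : Polynomial k) (hg : g.eval 0 ≠ 0) :
    IsUnit (AdjoinRoot.mk F (g.map (algebraMap k A))) := by
  by_contra hu
  obtain ⟨Q, hQ, hgQ⟩ := exists_max_ideal_of_mem_nonunits hu
  have := hF.finite_adjoinRoot
  let P : Ideal A := Q.comap (algebraMap A (AdjoinRoot F))
  have hP : P.IsMaximal := Ideal.isMaximal_comap_of_isIntegral_of_isMaximal Q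
  let _ := Ideal.Quotient.field P
  let _ := Ideal.Quotient.field Q
  have : Algebra.IsIntegral (A ⧸ P) (AdjoinRoot F ⧸ Q) := inferInstance
  have : Algebra.IsAlgebraic (A ⧸ P) (AdjoinRoot F ⧸ Q) := inferInstance
  let ι : (AdjoinRoot F ⧸ Q) →ₐ[A ⧸ P] AlgebraicClosure (A ⧸ P) := IsAlgClosed.lift
  let θ : AdjoinRoot F →+* AlgebraicClosure (A ⧸ P) :=
    (ι : (AdjoinRoot F ⧸ Q) →+* _).comp (Ideal.Quotient.mk Q)
  have hθ : ∀ p : Polynomial A, θ (AdjoinRoot.mk F p) =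
      aeval (θ (AdjoinRoot.root F)) (p.map (Ideal.Quotient.mk P)) := by
    have hhom : θ.comp (AdjoinRoot.mk F) =
        ((aeval (θ (AdjoinRoot.root F)) : Polynomial (A ⧸ P) →ₐ[A ⧸ P] _) :
          Polynomial (A ⧸ P) →+* AlgebraicClosure (A ⧸ P)).comp
          (mapRingHom (Ideal.Quotient.mk P)) := by
      refine Polynomial.ringHom_ext (fun a => ?_) ?_
      · simpa [θ] using ι.commutes (Ideal.Quotient.mk P a)
      · simp
    exact fun p => DFunLike.congr_fun hhom p
  have h1 : aeval (θ (AdjoinRoot.root F)) (F.map (Ideal.Quotient.mk P)) = 0 := by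
    rw [← hθ, AdjoinRoot.mk_self, map_zero]
  have h2 : aeval (θ (AdjoinRoot.root F)) g = 0 := by
    have h3 := hθ (g.map (algebraMap k A))
    have h4 : θ (AdjoinRoot.mk F (g.map (algebraMap k A))) = 0 := by
      change ι (Ideal.Quotient.mk Q _) = 0
      rw [Ideal.Quotient.eq_zero_iff_mem.mpr hgQ, map_zero]
    rw [h4, Polynomial.map_map] at h3
    rw [h3]
    exact (aeval_map_algebraMap (A ⧸ P) _ g).symm
  rcases h P _ h1 with h0 | ht
  · rw [h0] at h2
    apply hg
    rw [← coeff_zero_eq_aeval_zero', coeff_zero_eq_eval_zero] at h2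
    simpa using h2
  · refine ht ⟨g, ?_, h2⟩
    rintro rfl
    simp at hg

end helpers

/-- Theorem 2.3.  Let `k` be a field, `A` a commutative `k`-algebra and
`F ∈ A[x]` monic of degree `n ≥ 1`.  The following six assertions are equivalent:
(1) for every maximal ideal `P` of `A`, every root of `F^φ` (where `φ : A → κ(P) = A/P`)
in an algebraic closure of `κ(P)` is zero or transcendental over `k`;
(2) for every `g ∈ k[x]` with `g(0) ≠ 0`, the element `s_{F,n}(g)` (the determinant of
multiplication by `g` on `A[x]/(F)`) is a unit of `A`;
(3) for every `g ∈ k[x]` with `g(0) ≠ 0`, the class of `g` in `A[x]/(F)` is a unit;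
(4) the canonical localization map `A[x]/(F) → (A ⊗_k k[x]_(x))/(F)` is an isomorphism;
(5) the `A`-module `(A ⊗_k k[x]_(x))/(F)` is free of rank `n` with basis the classes of
`1, x, …, x^{n−1}`;
(6) for every maximal ideal `P` of `A`, the `κ(P)`-vector space
`(κ(P) ⊗_k k[x]_(x))/(F^φ)` is `n`-dimensional with basis the classes of
`1, x, …, x^{n−1}`. -/
theorem statement4 {k A : Type*} [Field k] [CommRing A] [Algebra k A]
    (n : ℕ) (hn : 1 ≤ n) (F : Polynomial A) (hF : F.Monic) (hdeg : F.natDegree = n) :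
    List.TFAE
      [ -- (1)
        (∀ (P : Ideal A) [P.IsMaximal],
          letI := Ideal.Quotient.field P
          ∀ α : AlgebraicClosure (A ⧸ P),
            Polynomial.aeval α (F.map (Ideal.Quotient.mk P)) = 0 →
              α = 0 ∨ Transcendental k α),
        -- (2)
        (∀ g : Polynomial k, g.eval 0 ≠ 0 →
          IsUnit (LinearMap.det
            (LinearMap.mulLeft A (AdjoinRoot.mk F (g.map (algebraMap k A)))))),
        -- (3)
        (∀ g : Polynomial k, g.eval 0 ≠ 0 →
          IsUnit (AdjoinRoot.mk F (g.map (algebraMap k A)))),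
        -- (4)
        (Function.Bijective
          (Ideal.quotientMap (I := Ideal.span {F})
            (Ideal.span {algebraMap (Polynomial A) (LocX k A) F})
            (algebraMap (Polynomial A) (LocX k A))
            (by
              rw [Ideal.span_le]
              exact Set.singleton_subset_iff.mpr
                (Ideal.mem_comap.mpr (Ideal.subset_span (Set.mem_singleton _)))))),
        -- (5)
        (LinearIndependent A (fun i : Fin n =>
            Ideal.Quotient.mk (Ideal.span {algebraMap (Polynomial A) (LocX k A) F})
              (algebraMap (Polynomial A) (LocX k A) (X ^ (i : ℕ)))) ∧
          Submodule.span A (Set.range (fun i : Fin n =>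
            Ideal.Quotient.mk (Ideal.span {algebraMap (Polynomial A) (LocX k A) F})
              (algebraMap (Polynomial A) (LocX k A) (X ^ (i : ℕ))))) = ⊤),
        -- (6)
        (∀ (P : Ideal A) [P.IsMaximal],
          letI := Ideal.Quotient.field P
          LinearIndependent (A ⧸ P) (fun i : Fin n =>
            Ideal.Quotient.mk
              (Ideal.span {algebraMap (Polynomial (A ⧸ P)) (LocX k (A ⧸ P))
                (F.map (Ideal.Quotient.mk P))})
              (algebraMap (Polynomial (A ⧸ P)) (LocX k (A ⧸ P)) (X ^ (i : ℕ)))) ∧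
          Submodule.span (A ⧸ P) (Set.range (fun i : Fin n =>
            Ideal.Quotient.mk
              (Ideal.span {algebraMap (Polynomial (A ⧸ P)) (LocX k (A ⧸ P))
                (F.map (Ideal.Quotient.mk P))})
              (algebraMap (Polynomial (A ⧸ P)) (LocX k (A ⧸ P)) (X ^ (i : ℕ))))) = ⊤) ] := by
  tfae_have 3 → 1 := by
    intro h P hP
    let _ := Ideal.Quotient.field P
    intro α hα
    rw [← Ideal.Quotient.algebraMap_eq, aeval_map_algebraMap] at hα
    exact root_of_isUnit_mk F h α hα
  tfae_have 1 → 3 := fun h => isUnit_mk_of_roots hF h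
  tfae_have 2 ↔ 3 := forall₂_congr fun g _ => isUnit_norm_iff hF _
  tfae_have 3 → 4 := bijective_of_isUnit_mk F
  tfae_have 4 ↔ 5 := bijective_iff_basis hF hdeg
  tfae_have 4 → 3 := isUnit_mk_of_bijective F
  tfae_have 3 → 6 := by
    intro h P hP
    exact (isUnit_mk_iff_basis (k := k) (hF.map (Ideal.Quotient.mk P))
      ((hF.natDegree_map _).trans hdeg)).mp
      fun g hg => isUnit_mk_map (Ideal.Quotient.mkₐ k P) F g (h g hg)
  tfae_have 6 → 1 := by
    intro h P hP
    let _ := Ideal.Quotient.field P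
    exact root_of_isUnit_mk _ ((isUnit_mk_iff_basis (k := k) (hF.map (Ideal.Quotient.mk P))
      ((hF.natDegree_map _).trans hdeg)).mpr (h P))
  tfae_finish
end

section
/- Let k be a field, A a commutative k-algebra, and F = x^n − u_1x^{n−1} + ⋯ + (−1)^n u_n ∈ A[x] monic of degree n ≥ 1. Suppose that for every maximal ideal P of A with residue map φ : A → κ(P) = A/P, every root of F^φ in an algebraic closure of κ(P) is either zero or transcendental over k. Then for every polynomial g ∈ k[x] with g(0) ≠ 0, the element s_{F,n}(g) is a unit of A. -/
open Polynomial

/-!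
The determinant of multiplication by `g` is a unit exactly when `g` is a unit of `B = A[x]/(F)`.
Otherwise `g` lies in a maximal ideal `M` of `B`. Since `B` is integral over `A`, the contraction
`P = M ∩ A` is maximal and `B/M` is algebraic over `A/P`, so it embeds into an algebraic closure of
`A/P`. The image `α` of `x` under this embedding is a common root of `F` modulo `P` and of `g`. It
is not zero, as `g(0) ≠ 0`, and not transcendental over `k`, as `g(α) = 0` with `g ≠ 0`.
-/

theorem statement5 {k A : Type*} [Field k] [CommRing A] [Algebra k A]
    (n : ℕ) (hn : 1 ≤ n) (F : Polynomial A) (hF : F.Monic) (hdeg : F.natDegree = n)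
    (h : ∀ (P : Ideal A) [P.IsMaximal],
      letI := Ideal.Quotient.field P
      ∀ α : AlgebraicClosure (A ⧸ P),
        Polynomial.aeval α (F.map (Ideal.Quotient.mk P)) = 0 →
          α = 0 ∨ Transcendental k α) :
    ∀ g : Polynomial k, g.eval 0 ≠ 0 →
      IsUnit (LinearMap.det
        (LinearMap.mulLeft A (AdjoinRoot.mk F (g.map (algebraMap k A))))) := by
  intro g hg
  suffices hu : IsUnit (AdjoinRoot.mk F (g.map (algebraMap k A))) by
    exact (hu.map (Algebra.lmul A (AdjoinRoot F))).map LinearMap.det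
  by_contra hu
  obtain ⟨M, hM, hgM⟩ := exists_max_ideal_of_mem_nonunits hu
  have : Module.Finite A (AdjoinRoot F) := hF.finite_adjoinRoot
  have hP : (M.under A).IsMaximal := Ideal.isMaximal_comap_of_isIntegral_of_isMaximal M
  letI := Ideal.Quotient.field (M.under A)
  letI := Ideal.Quotient.field M
  have : Algebra.IsIntegral (A ⧸ M.under A) (AdjoinRoot F ⧸ M) := inferInstance
  let e : (AdjoinRoot F ⧸ M) →ₐ[A ⧸ M.under A] AlgebraicClosure (A ⧸ M.under A) :=
    IsAlgClosed.lift
  let ψ : AdjoinRoot F →+* AlgebraicClosure (A ⧸ M.under A) :=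
    e.toRingHom.comp (Ideal.Quotient.mk M)
  have hψ : ∀ a : A, ψ (AdjoinRoot.of F a) =
      algebraMap (A ⧸ M.under A) _ (Ideal.Quotient.mk _ a) := fun a =>
    e.commutes (Ideal.Quotient.mk _ a)
  have hcomp : ψ.comp (AdjoinRoot.of F) =
      (algebraMap (A ⧸ M.under A) (AlgebraicClosure (A ⧸ M.under A))).comp
        (Ideal.Quotient.mk _) := RingHom.ext hψ
  have hev : ∀ p : A[X], ψ (AdjoinRoot.mk F p) =
      aeval (ψ (AdjoinRoot.root F)) (p.map (Ideal.Quotient.mk (M.under A))) := by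
    intro p
    rw [aeval_def, eval₂_map, ← hcomp, ← hom_eval₂, ← AdjoinRoot.aeval_eq]
    rfl
  have hgα : aeval (ψ (AdjoinRoot.root F)) g = 0 := by
    have h0 : ψ (AdjoinRoot.mk F (g.map (algebraMap k A))) = 0 := by
      have : Ideal.Quotient.mk M (AdjoinRoot.mk F (g.map (algebraMap k A))) = 0 :=
        Ideal.Quotient.eq_zero_iff_mem.2 hgM
      simp only [ψ, RingHom.comp_apply, this, map_zero]
    rw [hev, map_map, aeval_def, eval₂_map] at h0
    exact h0
  have hFα := hev F
  rw [AdjoinRoot.mk_self, map_zero] at hFα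
  rcases h (M.under A) _ hFα.symm with h0 | ht
  · rw [h0, aeval_def, eval₂_at_zero, coeff_zero_eq_eval_zero] at hgα
    exact hg ((map_eq_zero _).1 hgα)
  · refine ht ⟨g, ?_, hgα⟩
    rintro rfl
    simp at hg
end

section
/- Let k be a field, A a commutative k-algebra, and F = x^n − u_1x^{n−1} + ⋯ + (−1)^n u_n ∈ A[x] monic of degree n ≥ 1. Suppose that for every maximal ideal P of A with residue map φ : A → κ(P) = A/P, the κ(P)-vector space (κ(P) ⊗_k k[x]_(x))/(F^φ) is n-dimensional with basis the classes of 1, x, …, x^{n−1}. Then for every maximal ideal P of A with residue map φ, every root of F^φ in an algebraic closure of κ(P) is either zero or transcendental over k. -/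
/-!
Write `K = A/P` and `f = F^φ`, and let `α` be a nonzero root of `f` that is algebraic over `k`.
The minimal polynomial of `α` over `k` has nonzero constant term, so it becomes a unit in
`K ⊗_k k[x]_(x)`; its divisor `m`, the minimal polynomial of `α` over `K`, becomes a unit as well.
Since `f = m * q` with `q ≠ 0` and `deg q < n`, the image of `q` lies in the ideal generated by `f`,
which is a nontrivial `K`-linear relation among the classes of `1, x, …, x^{n-1}`.
-/


open Polynomial

/-- A nonzero polynomial of degree `< n` has nonzero class modulo `(f)` in the localization, when
the classes of `1, x, …, x^{n-1}` are linearly independent. -/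
theorem eq_zero_of_mem_span {k K : Type*} [Field k] [Field K] [Algebra k K] {n : ℕ}
    {f q : Polynomial K}
    (h : LinearIndependent K (fun i : Fin n =>
        Ideal.Quotient.mk (Ideal.span {algebraMap (Polynomial K) (LocX k K) f})
          (algebraMap (Polynomial K) (LocX k K) (X ^ (i : ℕ)))))
    (hq : q.natDegree < n)
    (hmem : algebraMap (Polynomial K) (LocX k K) q ∈
      Ideal.span {algebraMap (Polynomial K) (LocX k K) f}) : q = 0 := by
  let L : Polynomial K →ₗ[K] (LocX k K ⧸ Ideal.span {algebraMap (Polynomial K) (LocX k K) f}) :=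
    ((Ideal.Quotient.mkₐ K _).comp (IsScalarTower.toAlgHom K (Polynomial K) (LocX k K))).toLinearMap
  have hL : L q = 0 := Ideal.Quotient.eq_zero_iff_mem.mpr hmem
  have hsum : q = ∑ i : Fin n, q.coeff i • (X : Polynomial K) ^ (i : ℕ) := by
    rw [Fin.sum_univ_eq_sum_range (fun i => q.coeff i • (X : Polynomial K) ^ i) n]
    simpa only [smul_eq_C_mul] using q.as_sum_range_C_mul_X_pow' hq
  have hcoeff := Fintype.linearIndependent_iff.mp h (fun i => q.coeff i) (by
    rw [hsum, map_sum] at hL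
    simp only [map_smul] at hL
    exact hL)
  rw [hsum]
  exact Finset.sum_eq_zero fun i _ => by rw [hcoeff i, zero_smul]

/-- The minimal polynomial over `K` of a nonzero element algebraic over `k` is a unit in the
localization: it divides the minimal polynomial over `k`, which has nonzero constant term. -/
theorem isUnit_minpoly {k K E : Type*} [Field k] [Field K] [Algebra k K]
    [Field E] [Algebra K E] [Algebra k E] [IsScalarTower k K E] {α : E}
    (hα : α ≠ 0) (halg : IsAlgebraic k α) :
    IsUnit (algebraMap (Polynomial K) (LocX k K) (minpoly K α)) := by
  have h0 : minpoly k α ∈ nzConst k := by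
    change (minpoly k α).eval 0 ≠ 0
    rw [← coeff_zero_eq_eval_zero]
    exact minpoly.coeff_zero_ne_zero halg.isIntegral hα
  have hunit : IsUnit (algebraMap (Polynomial K) (LocX k K)
      ((minpoly k α).map (algebraMap k K))) :=
    IsLocalization.map_units (LocX k K)
      (⟨_, Submonoid.mem_map_of_mem (mapRingHom (algebraMap k K)).toMonoidHom h0⟩ :
        nzConstMap k K)
  exact isUnit_of_dvd_unit (map_dvd _ (minpoly.dvd_map_of_isScalarTower k K α)) hunit

/-- The case of a single residue field `K`, for an arbitrary extension `E` of `K`. -/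
theorem root_zero_or_transcendental {k K E : Type*} [Field k] [Field K] [Algebra k K]
    [Field E] [Algebra K E] [Algebra k E] [IsScalarTower k K E] {n : ℕ}
    {f : Polynomial K} (hf : f.Monic) (hdeg : f.natDegree = n)
    (h : LinearIndependent K (fun i : Fin n =>
        Ideal.Quotient.mk (Ideal.span {algebraMap (Polynomial K) (LocX k K) f})
          (algebraMap (Polynomial K) (LocX k K) (X ^ (i : ℕ)))))
    {α : E} (hroot : aeval α f = 0) : α = 0 ∨ Transcendental k α := by
  by_contra! hcon
  obtain ⟨hα, htr⟩ := hcon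
  have halg : IsAlgebraic k α := not_not.mp htr
  have hint : IsIntegral K α := halg.isIntegral.tower_top
  obtain ⟨q, hq⟩ := minpoly.dvd K α hroot
  have hq0 : q ≠ 0 := by
    rintro rfl
    exact hf.ne_zero (by rw [hq, mul_zero])
  have hlt : q.natDegree < n := by
    have hpos := minpoly.natDegree_pos hint
    have hadd := natDegree_mul (minpoly.ne_zero hint) hq0
    rw [← hq, hdeg] at hadd
    omega
  refine hq0 (eq_zero_of_mem_span h hlt (Ideal.mem_span_singleton.mpr ?_))
  rw [hq, map_mul]
  exact (isUnit_minpoly hα halg).mul_left_dvd.mpr dvd_rfl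

/-- Let `k` be a field, `A` a commutative `k`-algebra and `F ∈ A[x]` monic
of degree `n ≥ 1`.  Suppose that for every maximal ideal `P` of `A` with residue map
`φ : A → κ(P) = A/P`, the `κ(P)`-vector space `(κ(P) ⊗_k k[x]_(x))/(F^φ)` is
`n`-dimensional with basis the classes of `1, x, …, x^{n−1}`.  Then for every maximal ideal
`P` of `A`, every root of `F^φ` in an algebraic closure of `κ(P)` is zero or transcendental
over `k`. -/
theorem statement6 {k A : Type*} [Field k] [CommRing A] [Algebra k A]
    (n : ℕ) (hn : 1 ≤ n) (F : Polynomial A) (hF : F.Monic) (hdeg : F.natDegree = n)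
    (h : ∀ (P : Ideal A) [P.IsMaximal],
      letI := Ideal.Quotient.field P
      LinearIndependent (A ⧸ P) (fun i : Fin n =>
        Ideal.Quotient.mk
          (Ideal.span {algebraMap (Polynomial (A ⧸ P)) (LocX k (A ⧸ P))
            (F.map (Ideal.Quotient.mk P))})
          (algebraMap (Polynomial (A ⧸ P)) (LocX k (A ⧸ P)) (X ^ (i : ℕ)))) ∧
      Submodule.span (A ⧸ P) (Set.range (fun i : Fin n =>
        Ideal.Quotient.mk
          (Ideal.span {algebraMap (Polynomial (A ⧸ P)) (LocX k (A ⧸ P))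
            (F.map (Ideal.Quotient.mk P))})
          (algebraMap (Polynomial (A ⧸ P)) (LocX k (A ⧸ P)) (X ^ (i : ℕ))))) = ⊤) :
    ∀ (P : Ideal A) [P.IsMaximal],
      letI := Ideal.Quotient.field P
      ∀ α : AlgebraicClosure (A ⧸ P),
        Polynomial.aeval α (F.map (Ideal.Quotient.mk P)) = 0 →
          α = 0 ∨ Transcendental k α := by
  intro P _
  let _ := Ideal.Quotient.field P
  intro α hα
  exact root_zero_or_transcendental (hF.map _) ((hF.natDegree_map _).trans hdeg) (h P).1 hα
end

section
/- Let k be a field, n ≥ 1, and A a commutative k-algebra. Given a k-algebra homomorphism ψ : H_n → A, set u_i = ψ(s_i(t)) for i = 1, …, n and F_n^ψ(x) = x^n − u_1x^{n−1} + ⋯ + (−1)^n u_n ∈ A[x]. Then the A-module (A ⊗_k k[x]_(x))/(F_n^ψ) is free of rank n with basis the classes of the elements 1, x, …, x^{n−1}. In particular, the H_n-module (H_n ⊗_k k[x]_(x))/(F_n(x)) is free of rank n with basis the classes of 1, x, …, x^{n−1}. -/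
/-!
Write `F` for `F_n^ψ`. Since `F` is monic of degree `n`, the ring `A[x]/(F)` is free over `A` on
`1, x, …, x^{n-1}`, so it suffices that passing from `A[x]` to its localization `A ⊗_k k[x]_(x)`
does not change the quotient by `F`, i.e. that every `g ∈ k[x]` with `g(0) ≠ 0` is a unit modulo
`F`. As `F` is monic, this holds as soon as the resultant of `F` and `g` is a unit of `A`
(`isUnit_resultant_iff_isCoprime`). The resultant commutes with ring homomorphisms, and already over
the symmetric polynomials it equals `g(t_1)⋯g(t_n)`: inside `k[t_1,…,t_n]` the generic polynomial
splits as `∏ (x - t_i)`. This is an element of `U`, hence invertible in `H_n` and, through `ψ`,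
in `A` (`isCoprime_genPoly`). The passage from coprimality to the basis is `locQuot_basis`.
-/

open Polynomial

open Polynomial

/-- The multiplicative subset `U = {g(t_1)⋯g(t_n) : g ∈ k[x], g(0) ≠ 0}` of the algebra
`k[t_1,…,t_n]^{sym}` of symmetric polynomials. -/
noncomputable def symU (k : Type*) [Field k] (n : ℕ) :
    Submonoid (MvPolynomial.symmetricSubalgebra (Fin n) k) where
  carrier := {p | ∃ g : Polynomial k, g.eval 0 ≠ 0 ∧
      (p : MvPolynomial (Fin n) k) = ∏ i, Polynomial.aeval (MvPolynomial.X i) g}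
  mul_mem' := by
    rintro a b ⟨g₁, h₁, e₁⟩ ⟨g₂, h₂, e₂⟩
    refine ⟨g₁ * g₂, by simpa [eval_mul] using mul_ne_zero h₁ h₂, ?_⟩
    push_cast
    rw [e₁, e₂, ← Finset.prod_mul_distrib]
    simp [map_mul]
  one_mem' := ⟨1, by simp, by simp⟩

/-- `H_n`, the localization of the ring of symmetric polynomials in `n` variables over `k`
at the multiplicative set `U`. -/
noncomputable abbrev Hn (k : Type*) [Field k] (n : ℕ) := Localization (symU k n)

/-- The image in `H_n` of the `i`-th elementary symmetric polynomial `s_i(t)`. -/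
noncomputable def esymmH (k : Type*) [Field k] (n : ℕ) (i : ℕ) : Hn k n :=
  algebraMap (MvPolynomial.symmetricSubalgebra (Fin n) k) (Hn k n)
    ⟨MvPolynomial.esymm (Fin n) k i,
      (MvPolynomial.mem_symmetricSubalgebra _).mpr (MvPolynomial.esymm_isSymmetric _ _ i)⟩

/-- The monic polynomial `x^n − u_1x^{n−1} + ⋯ + (−1)^n u_n` associated to a sequence of
coefficients `u_1, …, u_n`. -/
noncomputable def genPoly {A : Type*} [CommRing A] (n : ℕ) (u : ℕ → A) : Polynomial A :=
  X ^ n + ∑ i ∈ Finset.Icc 1 n, C ((-1 : A) ^ i * u i) * X ^ (n - i)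

/-- Vieta: over `k[t_1,…,t_n]` the generic polynomial splits as `∏ (x - t_i)`. -/
theorem genPoly_esymm_eq_prod (k : Type*) [Field k] (n : ℕ) :
    genPoly n (fun j => MvPolynomial.esymm (Fin n) k j) =
      ∏ i : Fin n, (X - C (MvPolynomial.X i : MvPolynomial (Fin n) k)) := by
  have h := Multiset.prod_X_sub_X_eq_sum_esymm
    (Finset.univ.val.map fun i : Fin n => (MvPolynomial.X i : MvPolynomial (Fin n) k))
  rw [Multiset.map_map] at h
  simp only [Multiset.card_map, Finset.card_val, Finset.card_univ, Fintype.card_fin,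
    ← MvPolynomial.esymm_eq_multiset_esymm] at h
  rw [Finset.prod_eq_multiset_prod]
  refine Eq.trans ?_ h.symm
  rw [Finset.sum_range_succ', genPoly, add_comm, Finset.range_eq_Ico,
    Finset.sum_Ico_add' (fun j => (-1) ^ j * (C (MvPolynomial.esymm (Fin n) k j) * X ^ (n - j)))
      0 n 1]
  simp [mul_assoc, ← Finset.Ico_add_one_right_eq_Icc]

theorem genPoly_map {A B : Type*} [CommRing A] [CommRing B] (f : A →+* B) (n : ℕ) (u : ℕ → A) :
    (genPoly n u).map f = genPoly n (fun j => f (u j)) := by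
  simp [genPoly, Polynomial.map_sum]

theorem degree_genPoly_sub_X_pow_lt {A : Type*} [CommRing A] (n : ℕ) (u : ℕ → A) :
    (∑ i ∈ Finset.Icc 1 n, C ((-1 : A) ^ i * u i) * X ^ (n - i)).degree < (n : WithBot ℕ) := by
  rw [← mem_degreeLT]
  refine Submodule.sum_mem _ ?_
  intro i hi
  rw [Finset.mem_Icc] at hi
  rw [mem_degreeLT]
  refine lt_of_le_of_lt (degree_C_mul_X_pow_le _ _) ?_
  exact_mod_cast (by omega : n - i < n)

theorem genPoly_monic {A : Type*} [CommRing A] (n : ℕ) (u : ℕ → A) : (genPoly n u).Monic :=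
  monic_X_pow_add (degree_genPoly_sub_X_pow_lt n u)

theorem genPoly_natDegree {A : Type*} [CommRing A] [Nontrivial A] (n : ℕ) (u : ℕ → A) :
    (genPoly n u).natDegree = n := by
  refine natDegree_eq_of_degree_eq_some ?_
  rw [genPoly, degree_add_eq_left_of_degree_lt] <;> rw [degree_X_pow]
  exact degree_genPoly_sub_X_pow_lt n u

/-- Every `g ∈ k[x]` with `g(0) ≠ 0` is a unit modulo `F_n^ψ`: the resultant of the generic
polynomial and `g` is `g(t_1)⋯g(t_n) ∈ U`, which becomes invertible in `H_n`, hence in `A`. -/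
theorem isCoprime_genPoly {k : Type*} [Field k] (n : ℕ) {A : Type*} [CommRing A] [Nontrivial A]
    [Algebra k A] (ψ : Hn k n →ₐ[k] A) (g : k[X]) (hg : g.eval 0 ≠ 0) :
    IsCoprime (genPoly n (fun j => ψ (esymmH k n j))) (g.map (algebraMap k A)) := by
  rw [← isUnit_resultant_iff_isCoprime (genPoly_monic _ _), genPoly_natDegree, natDegree_map]
  let S := MvPolynomial.symmetricSubalgebra (Fin n) k
  let e : ℕ → S := fun j => ⟨MvPolynomial.esymm (Fin n) k j,
    (MvPolynomial.mem_symmetricSubalgebra _).mpr (MvPolynomial.esymm_isSymmetric _ _ j)⟩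
  let φ : S →+* A := (ψ : Hn k n →+* A).comp (algebraMap S (Hn k n))
  -- The resultant is computed over the symmetric polynomials, from which `φ` carries it to `A`.
  have hF : genPoly n (fun j => ψ (esymmH k n j)) = (genPoly n e).map φ := by
    rw [genPoly_map]; rfl
  have hgA : g.map (algebraMap k A) = (g.map (algebraMap k S)).map φ := by
    rw [Polynomial.map_map]
    congr 1
    ext c
    change _ = ψ (algebraMap S (Hn k n) (algebraMap k S c))
    rw [← IsScalarTower.algebraMap_apply k S (Hn k n), AlgHom.commutes]
  rw [hF, hgA, resultant_map_map]
  have hU : resultant (genPoly n e) (g.map (algebraMap k S)) n g.natDegree ∈ symU k n := by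
    refine ⟨g, hg, ?_⟩
    change S.val.toRingHom _ = _
    rw [← resultant_map_map, genPoly_map, Polynomial.map_map]
    change resultant (genPoly n (fun j => MvPolynomial.esymm (Fin n) k j))
      (g.map (algebraMap k (MvPolynomial (Fin n) k))) _ _ = _
    have hd := genPoly_natDegree n (fun j => MvPolynomial.esymm (Fin n) k j)
    rw [genPoly_esymm_eq_prod] at hd ⊢
    have hr := resultant_prod_left Finset.univ
      (fun i : Fin n => X - C (MvPolynomial.X i : MvPolynomial (Fin n) k))
      (g.map (algebraMap k (MvPolynomial (Fin n) k))) g.natDegree (by simp) natDegree_map_le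
    rw [hd] at hr
    rw [hr]
    refine Finset.prod_congr rfl fun i _ => ?_
    rw [natDegree_X_sub_C, resultant_X_sub_C_left _ _ _ natDegree_map_le, eval_map_algebraMap]
  exact (IsLocalization.map_units (Hn k n) ⟨_, hU⟩).map (ψ : Hn k n →+* A)

section Quotient

variable {A : Type*} [CommRing A] (M : Submonoid A[X]) (F : A[X])

/-- The comparison map from `M⁻¹A[x]/(F)` back to `A[x]/(F)`, which exists because every element of
`M` is already a unit modulo `F`; it gives the linear independence in `locQuot_basis`. -/
theorem exists_locQuot_linearMap (hM : ∀ m ∈ M, IsCoprime F m) :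
    ∃ φ : (Localization M ⧸ Ideal.span {algebraMap A[X] (Localization M) F}) →ₗ[A] AdjoinRoot F,
      ∀ p : A[X], φ (Ideal.Quotient.mk _ (algebraMap A[X] (Localization M) p)) =
        AdjoinRoot.mk F p := by
  have hu : ∀ m : M, IsUnit (AdjoinRoot.mk F m) := by
    rintro ⟨m, hm⟩
    obtain ⟨a, b, h⟩ := hM m hm
    refine IsUnit.of_mul_eq_one_right (AdjoinRoot.mk F b) ?_
    simpa using congrArg (AdjoinRoot.mk F) h
  let f : Localization M →+* AdjoinRoot F := IsLocalization.lift hu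
  have hf : ∀ p, f (algebraMap A[X] (Localization M) p) = AdjoinRoot.mk F p :=
    fun p => IsLocalization.lift_eq hu p
  have hI : ∀ a ∈ Ideal.span {algebraMap A[X] (Localization M) F}, f a = 0 := by
    change Ideal.span {algebraMap A[X] (Localization M) F} ≤ RingHom.ker f
    rw [Ideal.span_singleton_le_iff_mem, RingHom.mem_ker, hf, AdjoinRoot.mk_self]
  let φ : (Localization M ⧸ Ideal.span {algebraMap A[X] (Localization M) F}) →ₐ[A]
      AdjoinRoot F :=
    { Ideal.Quotient.lift _ f hI with
      commutes' := fun c => hf (C c) }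
  exact ⟨φ.toLinearMap, hf⟩

/-- Since denominators are units modulo `F`, every class in `M⁻¹A[x]/(F)` is represented by a
polynomial. -/
theorem exists_polynomial_rep (hM : ∀ m ∈ M, IsCoprime F m)
    (y : Localization M ⧸ Ideal.span {algebraMap A[X] (Localization M) F}) :
    ∃ p : A[X], Ideal.Quotient.mk _ (algebraMap A[X] (Localization M) p) = y := by
  obtain ⟨z, rfl⟩ := Ideal.Quotient.mk_surjective y
  obtain ⟨p, ⟨m, hm⟩, rfl⟩ := IsLocalization.exists_mk'_eq M z
  obtain ⟨a, b, h⟩ := hM m hm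
  -- `b` inverts `m` modulo `F`, since `a * F + b * m = 1`; thus `p / m ≡ p * b`.
  refine ⟨p * b, ?_⟩
  rw [Ideal.Quotient.eq, Ideal.mem_span_singleton]
  refine ⟨- IsLocalization.mk' _ (p * a) (⟨m, hm⟩ : M), ?_⟩
  have hmu := IsLocalization.map_units (Localization M) (⟨m, hm⟩ : M)
  refine hmu.mul_left_injective ?_
  have h1 := IsLocalization.mk'_spec (Localization M) p (⟨m, hm⟩ : M)
  have h2 := IsLocalization.mk'_spec (Localization M) (p * a) (⟨m, hm⟩ : M)
  have h' := congrArg (algebraMap A[X] (Localization M)) h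
  simp only [map_add, map_mul, map_one] at h1 h2 h' ⊢
  linear_combination (algebraMap A[X] (Localization M) p) * h' - h1 +
    (algebraMap A[X] (Localization M) F) * h2

/-- If `F` is monic and coprime to every element of `M`, then `1, x, …, x^{deg F - 1}` is a basis of
`M⁻¹A[x]/(F)`. -/
theorem locQuot_basis {n : ℕ} (hF : F.Monic) (hn : F.natDegree = n)
    (hM : ∀ m ∈ M, IsCoprime F m) :
    LinearIndependent A (fun i : Fin n =>
      Ideal.Quotient.mk (Ideal.span {algebraMap A[X] (Localization M) F})
        (algebraMap A[X] (Localization M) (X ^ (i : ℕ)))) ∧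
    Submodule.span A (Set.range (fun i : Fin n =>
      Ideal.Quotient.mk (Ideal.span {algebraMap A[X] (Localization M) F})
        (algebraMap A[X] (Localization M) (X ^ (i : ℕ))))) = ⊤ := by
  classical
  subst hn
  constructor
  · obtain ⟨φ, hφ⟩ := exists_locQuot_linearMap M F hM
    refine LinearIndependent.of_comp φ ?_
    have hb := (AdjoinRoot.powerBasis' hF).basis.linearIndependent
    rw [PowerBasis.coe_basis] at hb
    convert! hb using 1
    ext i
    exact (hφ _).trans (map_pow _ _ _)
  · rw [eq_top_iff]
    rintro y -
    obtain ⟨p, rfl⟩ := exists_polynomial_rep M F hM y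
    have hp : Ideal.Quotient.mk (Ideal.span {algebraMap A[X] (Localization M) F})
        (algebraMap A[X] (Localization M) p) =
        Ideal.Quotient.mk _ (algebraMap A[X] (Localization M) (p %ₘ F)) := by
      rw [Ideal.Quotient.eq, Ideal.mem_span_singleton, ← map_sub]
      exact map_dvd _ ⟨p /ₘ F, by linear_combination -modByMonic_add_div p F⟩
    -- The remainder is a combination of `1, x, …, x^{deg F - 1}`, and so is its class.
    let Ψ : A[X] →ₐ[A] (Localization M ⧸ Ideal.span {algebraMap A[X] (Localization M) F}) :=
      (Ideal.Quotient.mkₐ A _).comp (IsScalarTower.toAlgHom A A[X] (Localization M))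
    rw [hp]
    have hmem : p %ₘ F ∈ degreeLT A F.natDegree := by
      nontriviality A
      rw [mem_degreeLT, ← degree_eq_natDegree hF.ne_zero]
      exact degree_modByMonic_lt p hF
    change Ψ (p %ₘ F) ∈ _
    rw [degreeLT_eq_span_X_pow] at hmem
    have := Submodule.mem_map_of_mem (f := Ψ.toLinearMap) hmem
    rw [Submodule.map_span] at this
    refine Submodule.span_mono ?_ this
    rintro _ ⟨q, hq, rfl⟩
    simp only [Finset.coe_image, Set.mem_image, Finset.mem_coe, Finset.mem_range] at hq
    obtain ⟨i, hi, rfl⟩ := hq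
    exact ⟨⟨i, hi⟩, rfl⟩

end Quotient

/-- Proposition 4.2.  Let `k` be a field, `n ≥ 1`, `A` a commutative
`k`-algebra and `ψ : H_n → A` a `k`-algebra homomorphism.  Set `u_i = ψ(s_i(t))` and
`F_n^ψ(x) = x^n − u_1x^{n−1} + ⋯ + (−1)^n u_n ∈ A[x]`.  Then the `A`-module
`(A ⊗_k k[x]_(x))/(F_n^ψ)` is free of rank `n` with basis the classes of
`1, x, …, x^{n−1}` (in particular, taking `A = H_n` and `ψ = id`, the `H_n`-module
`(H_n ⊗_k k[x]_(x))/(F_n(x))` is free of rank `n` with this basis). -/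
theorem statement10 {k : Type u} [Field k] (n : ℕ) (hn : 1 ≤ n)
    {A : Type v} [CommRing A] [Algebra k A] (ψ : Hn k n →ₐ[k] A) :
    LinearIndependent A (fun i : Fin n =>
      Ideal.Quotient.mk
        (Ideal.span {algebraMap (Polynomial A) (LocX k A)
          (genPoly n (fun j => ψ (esymmH k n j)))})
        (algebraMap (Polynomial A) (LocX k A) (X ^ (i : ℕ)))) ∧
    Submodule.span A (Set.range (fun i : Fin n =>
      Ideal.Quotient.mk
        (Ideal.span {algebraMap (Polynomial A) (LocX k A)
          (genPoly n (fun j => ψ (esymmH k n j)))})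
        (algebraMap (Polynomial A) (LocX k A) (X ^ (i : ℕ))))) = ⊤ := by
  rcases subsingleton_or_nontrivial A with hA | hA
  · have := Module.subsingleton A
      (LocX k A ⧸ Ideal.span {algebraMap (Polynomial A) (LocX k A)
          (genPoly n (fun j => ψ (esymmH k n j)))})
    exact ⟨linearIndependent_of_subsingleton, Subsingleton.elim _ _⟩
  · refine locQuot_basis (nzConstMap k A) _ (genPoly_monic _ _) (genPoly_natDegree _ _) ?_
    rintro _ ⟨g, hg, rfl⟩
    exact isCoprime_genPoly n ψ g hg
end

section
/- Let k be a field and n ≥ 1. There is exactly one k-algebra homomorphism H_n → k, namely the one induced by sending the image of every elementary symmetric polynomial s_i(t), i = 1, …, n, to 0. In particular, the point s_1(t) = ⋯ = s_n(t) = 0 is the only k-rational point of Spec H_n. -/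
/-!
The homomorphism is `p ↦ p(0)`: it sends `∏ g(t_i)` to `g(0)^n ≠ 0`, so it extends to `H_n`.

For uniqueness, let `ψ` be the restriction of some `H_n → k` to the symmetric polynomials.
The polynomial ring is integral over its symmetric subalgebra, since `-t_i` is a root of
`∏ (x + t_j)`. So some prime `Q` lies over `ker ψ`, and modulo `Q` every symmetric polynomial `p`
becomes the constant `ψ p`. The class `τ_i` of `t_i` modulo `Q` is therefore integral over `k`.
If `τ_i ≠ 0`, its minimal polynomial `g` over `k` has `g(0) ≠ 0`, so `∏ g(t_j)` is inverted in
`H_n`; but its class contains the factor `g(τ_i) = 0`, so `ψ` kills this unit, a contradiction.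
Hence all `τ_i` vanish, and `ψ p` is the constant coefficient of `p`.
-/

open Polynomial

theorem isIntegral_symmetricSubalgebra (k : Type*) [Field k] (n : ℕ) :
    Algebra.IsIntegral (MvPolynomial.symmetricSubalgebra (Fin n) k) (MvPolynomial (Fin n) k) := by
  have hX : ∀ i : Fin n, IsIntegral (MvPolynomial.symmetricSubalgebra (Fin n) k)
      (MvPolynomial.X i : MvPolynomial (Fin n) k) := by
    intro i
    set P : Polynomial (MvPolynomial (Fin n) k) :=
      ∏ j : Fin n, (Polynomial.X + Polynomial.C (MvPolynomial.X j)) with hP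
    have hmon : P.Monic := monic_prod_of_monic _ _ fun j _ => monic_X_add_C _
    have hl : P ∈ lifts (algebraMap (MvPolynomial.symmetricSubalgebra (Fin n) k)
        (MvPolynomial (Fin n) k)) := by
      rw [hP, MvPolynomial.prod_C_add_X_eq_sum_esymm]
      refine sum_mem fun j _ => mul_mem ?_ (pow_mem (X_mem_lifts _) _)
      exact C_mem_lifts (algebraMap (MvPolynomial.symmetricSubalgebra (Fin n) k)
        (MvPolynomial (Fin n) k)) ⟨MvPolynomial.esymm (Fin n) k j,
        (MvPolynomial.mem_symmetricSubalgebra _).mpr (MvPolynomial.esymm_isSymmetric _ _ j)⟩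
    obtain ⟨q, hq, -, hqm⟩ := lifts_and_natDegree_eq_and_monic hl hmon
    have : IsIntegral (MvPolynomial.symmetricSubalgebra (Fin n) k)
        (-MvPolynomial.X i : MvPolynomial (Fin n) k) := by
      refine ⟨q, hqm, ?_⟩
      rw [← eval_map, hq, hP, eval_prod]
      exact Finset.prod_eq_zero (Finset.mem_univ i) (by simp)
    simpa using this.neg
  refine ⟨fun p => ?_⟩
  induction p using MvPolynomial.induction_on with
  | C a =>
    exact isIntegral_algebraMap (R := MvPolynomial.symmetricSubalgebra (Fin n) k)
      (A := MvPolynomial (Fin n) k) (x := algebraMap k _ a)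
  | add p q hp hq => exact hp.add hq
  | mul_X p i hp => exact hp.mul (hX i)

/-- A `k`-point of the symmetric polynomials killing no element of `U` is evaluation at the
origin. -/
theorem eq_constantCoeff_of_ne_zero {k : Type*} [Field k] (n : ℕ)
    (ψ : MvPolynomial.symmetricSubalgebra (Fin n) k →ₐ[k] k)
    (hψ : ∀ u ∈ symU k n, ψ u ≠ 0) (p : MvPolynomial.symmetricSubalgebra (Fin n) k) :
    ψ p = MvPolynomial.constantCoeff (p : MvPolynomial (Fin n) k) := by
  have := isIntegral_symmetricSubalgebra k n
  have hker : (RingHom.ker ψ).IsPrime := RingHom.ker_isPrime _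
  obtain ⟨Q, hQ, hQc⟩ := Ideal.exists_ideal_over_prime_of_isIntegral_of_isDomain
    (S := MvPolynomial (Fin n) k) (RingHom.ker ψ) (by
      intro x hx
      have : x = 0 := Subtype.ext hx
      simp [this])
  let π := Ideal.Quotient.mkₐ k Q
  have hπ : ∀ s : MvPolynomial.symmetricSubalgebra (Fin n) k,
      π s = algebraMap k (MvPolynomial (Fin n) k ⧸ Q) (ψ s) := by
    intro s
    have h1 : s - algebraMap k _ (ψ s) ∈ RingHom.ker ψ := by
      simp [RingHom.mem_ker]
    rw [← hQc, Ideal.mem_comap] at h1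
    have h2 := Ideal.Quotient.eq_zero_iff_mem.mpr h1
    rw [map_sub, map_sub, sub_eq_zero] at h2
    exact h2
  have hint : ∀ i, IsIntegral k (π (MvPolynomial.X i)) := by
    intro i
    obtain ⟨q, hqm, hq⟩ := this.isIntegral (MvPolynomial.X i)
    refine ⟨q.map (ψ : _ →+* k), hqm.map _, ?_⟩
    have h := congrArg π hq
    rw [map_zero, ← AlgHom.coe_toRingHom, hom_eval₂] at h
    rw [eval₂_map, ← h]
    congr 1
    ext s
    exact (hπ s).symm
  have hzero : ∀ i, π (MvPolynomial.X i) = 0 := by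
    intro i
    by_contra hne
    set g := minpoly k (π (MvPolynomial.X i)) with hg
    have hg0 : g.eval 0 ≠ 0 := by
      rw [← coeff_zero_eq_eval_zero]
      exact minpoly.coeff_zero_ne_zero (hint i) hne
    have hsym : (∏ j, aeval (MvPolynomial.X j) g : MvPolynomial (Fin n) k) ∈
        MvPolynomial.symmetricSubalgebra (Fin n) k := by
      rw [MvPolynomial.mem_symmetricSubalgebra]
      intro e
      rw [map_prod]
      simp_rw [← aeval_algHom_apply, MvPolynomial.rename_X]
      exact Equiv.prod_comp e fun j => aeval (MvPolynomial.X j : MvPolynomial (Fin n) k) g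
    refine hψ ⟨_, hsym⟩ ⟨g, hg0, rfl⟩ ?_
    apply (algebraMap k (MvPolynomial (Fin n) k ⧸ Q)).injective
    rw [← hπ, map_zero, map_prod]
    refine Finset.prod_eq_zero (Finset.mem_univ i) ?_
    rw [← aeval_algHom_apply, hg, minpoly.aeval]
  have hev : π = (Algebra.ofId k _).comp (MvPolynomial.aeval (fun _ : Fin n => (0 : k))) := by
    ext i
    simp [hzero]
  apply (algebraMap k (MvPolynomial (Fin n) k ⧸ Q)).injective
  rw [← hπ, hev]
  simp [Algebra.ofId_apply]

/-- Evaluation at the origin, on symmetric polynomials. -/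
noncomputable def symEvalZero (k : Type*) [Field k] (n : ℕ) :
    MvPolynomial.symmetricSubalgebra (Fin n) k →ₐ[k] k :=
  (MvPolynomial.aeval (fun _ : Fin n => (0 : k))).comp (Subalgebra.val _)

theorem symEvalZero_apply {k : Type*} [Field k] (n : ℕ)
    (p : MvPolynomial.symmetricSubalgebra (Fin n) k) :
    symEvalZero k n p = MvPolynomial.constantCoeff (p : MvPolynomial (Fin n) k) := by
  simp [symEvalZero]

theorem isUnit_symEvalZero {k : Type*} [Field k] (n : ℕ) (u : symU k n) :
    IsUnit (symEvalZero k n u) := by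
  obtain ⟨u, g, hg, hu⟩ := u
  have : symEvalZero k n u = (g.eval 0) ^ n := by
    simp only [symEvalZero, AlgHom.comp_apply, Subalgebra.coe_val]
    rw [hu, map_prod]
    simp [← aeval_algHom_apply, ← coe_aeval_eq_eval]
  rw [isUnit_iff_ne_zero]
  change symEvalZero k n u ≠ 0
  rw [this]
  exact pow_ne_zero _ hg

/-- from Note 4.7.  Let `k` be a field and `n ≥ 1`.  There is exactly
one `k`-algebra homomorphism `H_n → k`, namely the one sending the image of every
elementary symmetric polynomial `s_i(t)` (`1 ≤ i`) to `0`.  In particular the point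
`s_1(t) = ⋯ = s_n(t) = 0` is the only `k`-rational point of `Spec H_n`. -/
theorem statement12 {k : Type*} [Field k] (n : ℕ) (hn : 1 ≤ n) :
    ∃ φ : Hn k n →ₐ[k] k,
      (∀ i : ℕ, 1 ≤ i → φ (esymmH k n i) = 0) ∧ ∀ φ' : Hn k n →ₐ[k] k, φ' = φ := by
  refine ⟨IsLocalization.liftAlgHom (M := symU k n) (f := symEvalZero k n)
    (isUnit_symEvalZero n), ?_, ?_⟩
  · intro i hi
    rw [esymmH, IsLocalization.liftAlgHom_apply, IsLocalization.lift_eq]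
    change symEvalZero k n _ = 0
    rw [symEvalZero_apply]
    simp only [MvPolynomial.esymm, map_sum, map_prod, MvPolynomial.constantCoeff_X]
    refine Finset.sum_eq_zero fun s hs => ?_
    rw [Finset.prod_const, (Finset.mem_powersetCard.mp hs).2, zero_pow (by omega)]
  · intro φ'
    refine IsLocalization.algHom_ext (symU k n) ?_
    ext p
    have h := eq_constantCoeff_of_ne_zero n
      (φ'.comp (IsScalarTower.toAlgHom k (MvPolynomial.symmetricSubalgebra (Fin n) k) (Hn k n)))
      (fun u hu => ((IsLocalization.map_units (Hn k n) ⟨u, hu⟩).map φ').ne_zero) p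
    refine h.trans ?_
    rw [← symEvalZero_apply]
    exact (IsLocalization.lift_eq (S := Hn k n) (g := (symEvalZero k n).toRingHom)
      (isUnit_symEvalZero n) p).symm
end

section
/- Let k be a field and n ≥ 2. Let F ∈ k[t_1,…,t_n] be a non-constant symmetric polynomial that is irreducible as an element of k[t_1,…,t_n]. Then the ideal generated by F in the subalgebra k[t_1,…,t_n]^{sym} of symmetric polynomials does not intersect U; that is, no product g(t_1)⋯g(t_n) with g ∈ k[x], g(0) ≠ 0, lies in the ideal F·k[t_1,…,t_n]^{sym}. -/
/-!
If `F` divides `∏ g(t_i)` in `k[t_1,…,t_n]`, then, being prime there (polynomial rings over a field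
are factorial), it divides some `g(t_i)`, which is nonzero because `g(0) ≠ 0`. By symmetry of `F`
it then divides every `g(t_j)`. The degree of `F` in a variable `t_a` is therefore zero: take
`j ≠ a`, possible as `n ≥ 2`, and use that `g(t_j)` does not involve `t_a`. So `F` is constant.
-/

open Polynomial

/-- If `g(0) ≠ 0`, then `g(X i)` is nonzero and its divisors do not involve `X j` for `j ≠ i`,
since the degree in `X j` is additive on products over a domain. -/
lemma degreeOf_eq_zero_of_dvd_aeval_X {k : Type*} [Field k] {n : ℕ}
    {F : MvPolynomial (Fin n) k} {g : Polynomial k} (hg : g.eval 0 ≠ 0) {i j : Fin n}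
    (hij : j ≠ i) (h : F ∣ Polynomial.aeval (MvPolynomial.X i) g) :
    F.degreeOf j = 0 := by
  have h0 : Polynomial.aeval (MvPolynomial.X i : MvPolynomial (Fin n) k) g ≠ 0 := by
    intro h0
    -- evaluating all variables at zero recovers `g(0)`
    have := congrArg (MvPolynomial.aeval (fun _ : Fin n => (0 : k))) h0
    rw [← Polynomial.aeval_algHom_apply, MvPolynomial.aeval_X, map_zero] at this
    exact hg (by rwa [Polynomial.coe_aeval_eq_eval] at this)
  have hdeg : (Polynomial.aeval (MvPolynomial.X i : MvPolynomial (Fin n) k) g).degreeOf j = 0 := by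
    have hmem : Polynomial.aeval (MvPolynomial.X i : MvPolynomial (Fin n) k) g ∈
        MvPolynomial.supported k ({i} : Set (Fin n)) := by
      rw [MvPolynomial.supported_eq_adjoin_X, Set.image_singleton]
      exact Polynomial.aeval_mem_adjoin_singleton k _
    rw [MvPolynomial.mem_supported] at hmem
    by_contra hne
    exact hij (hmem (MvPolynomial.mem_vars_iff_degreeOf_ne_zero.mpr hne))
  obtain ⟨c, hc⟩ := h
  rw [hc] at h0 hdeg
  rw [MvPolynomial.degreeOf_mul_eq (left_ne_zero_of_mul h0) (right_ne_zero_of_mul h0)] at hdeg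
  omega

/-- from Note 4.7.  Let `k` be a field, `n ≥ 2`, and let
`F ∈ k[t_1,…,t_n]` be a non-constant symmetric polynomial which is irreducible in
`k[t_1,…,t_n]`.  Then the ideal generated by `F` in the subalgebra `k[t_1,…,t_n]^{sym}` of
symmetric polynomials does not meet `U`: no product `g(t_1)⋯g(t_n)` with `g ∈ k[x]`,
`g(0) ≠ 0`, lies in the ideal `F·k[t_1,…,t_n]^{sym}`. -/
theorem statement13 {k : Type*} [Field k] (n : ℕ) (hn : 2 ≤ n)
    (F : MvPolynomial (Fin n) k) (hsym : F.IsSymmetric) (hnc : F.totalDegree ≠ 0)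
    (hirr : Irreducible F) :
    ∀ g : Polynomial k, g.eval 0 ≠ 0 →
      ∀ q : MvPolynomial.symmetricSubalgebra (Fin n) k,
        q ∈ Ideal.span {(⟨F, (MvPolynomial.mem_symmetricSubalgebra F).mpr hsym⟩ :
          MvPolynomial.symmetricSubalgebra (Fin n) k)} →
        (q : MvPolynomial (Fin n) k) ≠ ∏ i, Polynomial.aeval (MvPolynomial.X i) g := by
  rintro g hg q hq hprod
  obtain ⟨c, rfl⟩ := Ideal.mem_span_singleton.mp hq
  have hdvd : F ∣ ∏ i, Polynomial.aeval (MvPolynomial.X i) g :=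
    ⟨(c : MvPolynomial (Fin n) k), by rw [← hprod]; rfl⟩
  obtain ⟨i, -, hi⟩ := hirr.prime.exists_mem_finset_dvd hdvd
  have hall : ∀ j, F ∣ Polynomial.aeval (MvPolynomial.X j) g := by
    intro j
    have h := map_dvd (MvPolynomial.rename (R := k) (Equiv.swap i j)) hi
    rwa [hsym, ← Polynomial.aeval_algHom_apply, MvPolynomial.rename_X,
      Equiv.swap_apply_left] at h
  apply hnc
  rw [MvPolynomial.totalDegree_eq_zero_iff]
  intro m hm a
  have : Nontrivial (Fin n) := Fin.nontrivial_iff_two_le.mpr hn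
  obtain ⟨j, hj⟩ := exists_ne a
  have h0 := degreeOf_eq_zero_of_dvd_aeval_X hg hj.symm (hall j)
  exact Nat.le_zero.mp (h0 ▸ MvPolynomial.monomial_le_degreeOf a hm)
end

section
/- Let k be a field and n ≥ 2. Then the ring H_n is not a local ring. -/
/-! A local ring in which two elements sum to `1` has one of the two as a unit. Here
`1 + s_1` and `-s_1`, where `s_1 = t_1 + ⋯ + t_n`, are both non-units of `H_n`: each is killed by
a substitution `t ↦ v ∈ k[s]^n` under which no element of `U` vanishes.
For `s_1` take `v = 0`, where `∏ g(t_i)` becomes `g(0)^n ≠ 0`. For `1 + s_1` take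
`v = (s, -1 - s, 0, …, 0)`, which exists because `n ≥ 2`; there `∏ g(t_i)` becomes
`g(s) g(-1 - s) g(0)^(n-2)`, again nonzero. -/

open Polynomial

/-- If a substitution `t ↦ v` with values in `k[s]` keeps every element of `U` nonzero, then a
symmetric polynomial that it kills divides no element of `U`, so it is not a unit in `H_n`. -/
lemma not_isUnit_of_aeval_eq_zero {k : Type*} [Field k] {n : ℕ} (v : Fin n → k[X])
    (hv : ∀ g : k[X], g.eval 0 ≠ 0 → ∀ i, aeval (v i) g ≠ 0)
    (f : MvPolynomial.symmetricSubalgebra (Fin n) k)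
    (hf : MvPolynomial.aeval v (f : MvPolynomial (Fin n) k) = 0) :
    ¬ IsUnit (algebraMap _ (Hn k n) f) := by
  intro h
  rw [IsLocalization.algebraMap_isUnit_iff (symU k n)] at h
  obtain ⟨m, ⟨g, hg, hm⟩, c, rfl⟩ := h
  have h0 := congrArg (MvPolynomial.aeval v) hm
  rw [MulMemClass.coe_mul, map_mul, hf, zero_mul, map_prod] at h0
  refine Finset.prod_ne_zero_iff.mpr (fun i _ => ?_) h0.symm
  rw [← Polynomial.aeval_algHom_apply, MvPolynomial.aeval_X]
  exact hv g hg i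

/-- from Note 4.7.  Let `k` be a field and `n ≥ 2`.  Then the ring
`H_n` is not a local ring. -/
theorem statement14 {k : Type*} [Field k] (n : ℕ) (hn : 2 ≤ n) :
    ¬ IsLocalRing (Hn k n) := by
  intro hloc
  obtain ⟨m, rfl⟩ : ∃ m, n = m + 2 := ⟨n - 2, by omega⟩
  let f : MvPolynomial.symmetricSubalgebra (Fin (m + 2)) k :=
    ⟨∑ i, MvPolynomial.X i, (MvPolynomial.mem_symmetricSubalgebra _).mpr (by
      simpa [MvPolynomial.esymm_one] using MvPolynomial.esymm_isSymmetric (Fin (m + 2)) k 1)⟩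
  have hsum : algebraMap _ (Hn k (m + 2)) (1 + f) + algebraMap _ (Hn k (m + 2)) (-f) = 1 := by
    rw [← map_add, add_neg_cancel_right, map_one]
  rcases IsLocalRing.isUnit_or_isUnit_of_add_one hsum with h | h
  · refine not_isUnit_of_aeval_eq_zero
      (Fin.cons X (Fin.cons (-1 - X) (fun _ => 0))) ?_ (1 + f) ?_ h
    · intro g hg i
      have hg0 : g ≠ 0 := by rintro rfl; simp at hg
      refine Fin.cases ?_ (fun j => Fin.cases ?_ (fun l => ?_) j) i
      · simpa using hg0
      · rw [Fin.cons_succ, Fin.cons_zero, ← Polynomial.comp_eq_aeval, Ne,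
          Polynomial.comp_eq_zero_iff]
        rintro (h | ⟨-, h⟩)
        · exact hg0 h
        · have := congrArg (fun p => coeff p 1) h
          simp [coeff_one] at this
      · simpa [← Polynomial.coeff_zero_eq_aeval_zero', coeff_zero_eq_eval_zero] using hg
    · simp [f, Fin.sum_univ_succ]
  · refine not_isUnit_of_aeval_eq_zero (fun _ => 0) ?_ (-f) ?_ h
    · intro g hg i
      simpa [← Polynomial.coeff_zero_eq_aeval_zero', coeff_zero_eq_eval_zero] using hg
    · simp [f]
end

section
/- Let k be a field and n ≥ 1. The Krull dimension of the ring H_n equals n. -/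
/-!
By the fundamental theorem of symmetric polynomials, `k[t_1,…,t_n]^{sym}` is a polynomial ring in
the `n` elementary symmetric polynomials `s_1, …, s_n`, so it has Krull dimension `n`, and a
localization cannot have larger dimension. Conversely, the chain of primes
`(0) ⊂ (s_1) ⊂ (s_1, s_2) ⊂ ⋯ ⊂ (s_1, …, s_n)` survives in `H_n`: all its members consist of
polynomials with zero constant coefficient, whereas `g(t_1)⋯g(t_n)` has constant coefficient
`g(0)^n ≠ 0`.
-/

open Polynomial

/-- The endomorphism of `k[x_1,…,x_n]` killing the first `j` variables and fixing the others. -/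
noncomputable def killVars (k : Type*) [Field k] (n j : ℕ) :
    MvPolynomial (Fin n) k →ₐ[k] MvPolynomial (Fin n) k :=
  MvPolynomial.aeval fun i => if (i : ℕ) < j then 0 else MvPolynomial.X i

lemma killVars_killVars {k : Type*} [Field k] {n i j : ℕ} (hij : i ≤ j)
    (p : MvPolynomial (Fin n) k) : killVars k n j (killVars k n i p) = killVars k n j p := by
  suffices h : (killVars k n j).comp (killVars k n i) = killVars k n j from
    DFunLike.congr_fun h p
  ext1 a
  by_cases ha : (a : ℕ) < i
  · simp [killVars, ha, ha.trans_le hij]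
  · simp [killVars, ha]

lemma constantCoeff_killVars {k : Type*} [Field k] {n : ℕ} (j : ℕ) (p : MvPolynomial (Fin n) k) :
    MvPolynomial.constantCoeff (killVars k n j p) = MvPolynomial.constantCoeff p := by
  suffices h : (MvPolynomial.constantCoeff : MvPolynomial (Fin n) k →+* k).comp
      (killVars k n j).toRingHom = MvPolynomial.constantCoeff from DFunLike.congr_fun h p
  ext a
  · simp [killVars]
  · by_cases ha : (a : ℕ) < j <;> simp [killVars, ha]

/-- The fundamental theorem of symmetric polynomials: `x_{i+1} ↦ s_{i+1}(t)` is an isomorphism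
from `k[x_1,…,x_n]` onto `k[t_1,…,t_n]^{sym}`. -/
noncomputable def symEquiv (k : Type*) [Field k] (n : ℕ) :
    MvPolynomial (Fin n) k ≃ₐ[k] MvPolynomial.symmetricSubalgebra (Fin n) k :=
  MvPolynomial.esymmAlgEquiv (Fin n) k (Fintype.card_fin n)

lemma constantCoeff_symEquiv {k : Type*} [Field k] {n : ℕ} (p : MvPolynomial (Fin n) k) :
    MvPolynomial.constantCoeff (symEquiv k n p : MvPolynomial (Fin n) k) =
      MvPolynomial.constantCoeff p := by
  suffices h : (MvPolynomial.constantCoeff : MvPolynomial (Fin n) k →+* k).comp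
      (((MvPolynomial.symmetricSubalgebra (Fin n) k).val.comp
        (symEquiv k n).toAlgHom).toRingHom) = MvPolynomial.constantCoeff from
    DFunLike.congr_fun h p
  ext a
  · have h : symEquiv k n (MvPolynomial.C a) = algebraMap k _ a := (symEquiv k n).commutes a
    simp [h, MvPolynomial.algebraMap_eq]
  · have h : (symEquiv k n (MvPolynomial.X a) : MvPolynomial (Fin n) k) =
        MvPolynomial.esymm (Fin n) k (a + 1) := by
      refine (MvPolynomial.esymmAlgHom_apply _).trans ?_
      simp
    simp only [RingHom.coe_comp, Function.comp_apply, AlgHom.toRingHom_eq_coe, RingHom.coe_coe,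
      AlgHom.coe_comp, AlgEquiv.coe_toAlgHom, Subalgebra.coe_val, h, MvPolynomial.esymm, map_sum,
      map_prod, MvPolynomial.constantCoeff_X]
    refine Finset.sum_eq_zero fun t ht => ?_
    -- the degree `a + 1` is positive, so every monomial of `s_{a+1}` has a factor
    have hpos : 0 < t.card := by rw [(Finset.mem_powersetCard.mp ht).2]; omega
    simp [hpos.ne']

/-- The prime ideal `(s_1, …, s_j)` of `k[t_1,…,t_n]^{sym}`, described as the kernel of the map
killing `s_1, …, s_j`. -/
noncomputable def symPrime (k : Type*) [Field k] (n j : ℕ) :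
    Ideal (MvPolynomial.symmetricSubalgebra (Fin n) k) :=
  RingHom.ker ((killVars k n j).comp (symEquiv k n).symm.toAlgHom)

lemma mem_symPrime {k : Type*} [Field k] {n j : ℕ}
    {x : MvPolynomial.symmetricSubalgebra (Fin n) k} :
    x ∈ symPrime k n j ↔ killVars k n j ((symEquiv k n).symm x) = 0 := Iff.rfl

lemma symPrime_isPrime (k : Type*) [Field k] (n j : ℕ) : (symPrime k n j).IsPrime :=
  RingHom.ker_isPrime _

lemma symPrime_lt {k : Type*} [Field k] {n i j : ℕ} (hij : i < j) (hj : j ≤ n) :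
    symPrime k n i < symPrime k n j := by
  refine lt_of_le_of_ne (fun x hx => ?_) fun h => ?_
  · rw [mem_symPrime] at hx ⊢
    rw [← killVars_killVars hij.le, hx, map_zero]
  · -- the generator `s_{i+1}` distinguishes the two ideals
    have hmem : symEquiv k n (MvPolynomial.X ⟨i, hij.trans_le hj⟩) ∈ symPrime k n j := by
      simp [mem_symPrime, killVars, hij]
    rw [← h] at hmem
    simp [mem_symPrime, killVars] at hmem

lemma disjoint_symU_symPrime (k : Type*) [Field k] (n j : ℕ) :
    Disjoint (symU k n : Set (MvPolynomial.symmetricSubalgebra (Fin n) k))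
      (symPrime k n j : Set (MvPolynomial.symmetricSubalgebra (Fin n) k)) := by
  rw [Set.disjoint_left]
  rintro x ⟨g, hg, hx⟩ hxP
  have h0 : MvPolynomial.constantCoeff (x : MvPolynomial (Fin n) k) = 0 := by
    rw [← (symEquiv k n).apply_symm_apply x, constantCoeff_symEquiv,
      ← constantCoeff_killVars j, mem_symPrime.mp hxP, map_zero]
  have h1 (i : Fin n) : MvPolynomial.constantCoeff
      (Polynomial.aeval (MvPolynomial.X i : MvPolynomial (Fin n) k) g) = g.eval 0 := by
    rw [Polynomial.aeval_def, Polynomial.hom_eval₂]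
    simp [Polynomial.eval₂_eq_eval_map, MvPolynomial.algebraMap_eq]
  rw [hx, map_prod, Finset.prod_congr rfl fun i _ => h1 i] at h0
  exact Finset.prod_ne_zero_iff.mpr (fun _ _ => hg) h0

/-- Let `k` be a field and `n ≥ 1`.  The Krull dimension of the ring
`H_n` equals `n`. -/
theorem statement16 {k : Type*} [Field k] (n : ℕ) (hn : 1 ≤ n) :
    ringKrullDim (Hn k n) = n := by
  let e := IsLocalization.orderIsoOfPrime (symU k n) (Hn k n)
  apply le_antisymm
  · have hdim : ringKrullDim (MvPolynomial.symmetricSubalgebra (Fin n) k) = n := by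
      rw [← ringKrullDim_eq_of_ringEquiv (symEquiv k n).toRingEquiv,
        MvPolynomial.ringKrullDim_of_isNoetherianRing]
      simp
    rw [← hdim]
    refine Order.krullDim_le_of_strictMono
      (fun p => ⟨(e ⟨p.asIdeal, p.isPrime⟩).1, (e ⟨p.asIdeal, p.isPrime⟩).2.1⟩) fun p q hpq => ?_
    exact e.strictMono (a := ⟨p.asIdeal, p.isPrime⟩) (b := ⟨q.asIdeal, q.isPrime⟩) hpq
  · let P (j : Fin (n + 1)) :
        {p : Ideal (MvPolynomial.symmetricSubalgebra (Fin n) k) //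
          p.IsPrime ∧ Disjoint (symU k n : Set (MvPolynomial.symmetricSubalgebra (Fin n) k)) ↑p} :=
      ⟨symPrime k n j, symPrime_isPrime k n j, disjoint_symU_symPrime k n j⟩
    have hP : StrictMono P := fun i j hij => symPrime_lt hij (Nat.lt_succ_iff.mp j.2)
    let c : LTSeries (PrimeSpectrum (Hn k n)) :=
      { length := n
        toFun := fun j => ⟨(e.symm (P j)).1, (e.symm (P j)).2⟩
        step := fun j => e.symm.strictMono (hP j.castSucc_lt_succ) }
    exact Order.LTSeries.length_le_krullDim c
end
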